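/- (SAG, non-convex case, high probability.) Fix K ≥ 1, δ ∈ (0,1), let τ = ⌈(8N/3)·log(NK/δ)⌉, set α = 1/(16 L τ), and assume K ≥ 2τ. Then, with probability at least 1 − δ over the i.i.d. uniform sampling, the SAG iterates satisfy (1/(K − τ)) · Σ_{k=τ}^{K−1} ‖∇f(x_k)‖² ≤ 768 L² B² τ / K. -/

import Mathlib

/-!
If every index is sampled in every window of `τ` consecutive iterations, then each stored gradient
is at most `τ` steps old, so the SAG direction `g k` differs from the full gradient by at most
`L * α` times the sum of the last `τ` values of `‖g j‖`. Squaring, summing over `k` and inserting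
this error into the descent inequality, the total error is `(L * α * τ) ^ 2 * ∑ ‖g j‖ ^ 2`. For
small `L * α * τ` it is absorbed by the descent, except for the contribution of the first `τ`
directions; these are bounded because the iterates cannot leave a small ball around the origin
within `τ` steps.

A given window misses a given index with probability `(1 - 1 / N) ^ τ ≤ exp (-τ / N)`, and a union
bound over the at most `N * K` pairs shows that all windows hit all indices with probability at
least `1 - δ` as soon as `τ ≥ N * log (N * K / δ)`.
-/

section Averages

variable {ι E : Type*} [Fintype ι]

lemma norm_inv_card_smul_sum_le [Nonempty ι] [SeminormedAddCommGroup E] [NormedSpace ℝ E]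
    {v : ι → E} {C : ℝ} (hv : ∀ i, ‖v i‖ ≤ C) :
    ‖(Fintype.card ι : ℝ)⁻¹ • ∑ i, v i‖ ≤ C := by
  have hcard : (0 : ℝ) < Fintype.card ι := Nat.cast_pos.2 Fintype.card_pos
  rw [norm_smul, norm_inv, Real.norm_natCast, inv_mul_le_iff₀ hcard]
  simpa using norm_sum_le_of_le Finset.univ fun i _ ↦ hv i

lemma gradient_sum_div [NormedAddCommGroup E] [InnerProductSpace ℝ E] [CompleteSpace E]
    {F : ι → E → ℝ} {z : E} (hF : ∀ i, DifferentiableAt ℝ (F i) z) (c : ℝ) :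
    gradient (fun y ↦ (∑ i, F i y) / c) z = c⁻¹ • ∑ i, gradient (F i) z := by
  have hderiv : HasFDerivAt (fun y ↦ c⁻¹ • ∑ i, F i y) (c⁻¹ • ∑ i, fderiv ℝ (F i) z) z :=
    (HasFDerivAt.fun_sum fun i _ ↦ (hF i).hasFDerivAt).fun_const_smul _
  simp only [div_eq_inv_mul, ← smul_eq_mul, gradient, hderiv.fderiv, map_smul, map_sum]

end Averages

section Smooth

variable {E : Type*} [NormedAddCommGroup E] [InnerProductSpace ℝ E] [CompleteSpace E]

/-- `L`-smoothness: differentiability with an `L`-Lipschitz gradient. The constant is an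
arbitrary real number. -/
structure IsLSmooth (L : ℝ) (f : E → ℝ) : Prop where
  differentiable : Differentiable ℝ f
  norm_gradient_sub_le : ∀ y z, ‖gradient f y - gradient f z‖ ≤ L * ‖y - z‖

lemma gradient_eq_zero_of_forall_le {f : E → ℝ} {a : E} (ha : ∀ y, f a ≤ f y) :
    gradient f a = 0 := by
  have hmin : IsLocalMin f a := Filter.Eventually.of_forall ha
  simp [gradient, hmin.fderiv_eq_zero]

namespace IsLSmooth

variable {L : ℝ} {f : E → ℝ}

lemma sum_div_card {ι : Type*} [Fintype ι] [Nonempty ι] {F : ι → E → ℝ}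
    (hF : ∀ i, IsLSmooth L (F i)) :
    IsLSmooth L fun z ↦ (∑ i, F i z) / (Fintype.card ι : ℝ) where
  differentiable := by
    simpa only [div_eq_mul_inv] using
      (Differentiable.fun_sum fun i _ ↦ (hF i).differentiable).mul_const _
  norm_gradient_sub_le y z := by
    rw [gradient_sum_div (fun i ↦ (hF i).differentiable y),
      gradient_sum_div (fun i ↦ (hF i).differentiable z), ← smul_sub, ← Finset.sum_sub_distrib]
    exact norm_inv_card_smul_sum_le fun i ↦ (hF i).norm_gradient_sub_le y z

lemma norm_gradient_le (hf : IsLSmooth L f) {a : E} (ha : ∀ y, f a ≤ f y) (z : E) :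
    ‖gradient f z‖ ≤ L * ‖z - a‖ := by
  simpa [gradient_eq_zero_of_forall_le ha] using hf.norm_gradient_sub_le z a

lemma apply_add_le (hf : IsLSmooth L f) (z v : E) :
    f (z + v) ≤ f z + inner ℝ (gradient f z) v + L / 2 * ‖v‖ ^ 2 := by
  have hline (t : ℝ) :
      HasDerivAt (fun t : ℝ ↦ f (z + t • v)) (inner ℝ (gradient f (z + t • v)) v) t := by
    rw [inner_gradient_left]
    have hsegment : HasDerivAt (fun t : ℝ ↦ z + t • v) v t := by
      simpa using ((hasDerivAt_id t).smul_const v).const_add z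
    exact (hf.differentiable _).hasFDerivAt.comp_hasDerivAt t hsegment
  have hparabola (t : ℝ) :
      HasDerivAt (fun t : ℝ ↦ f z + t * inner ℝ (gradient f z) v + t ^ 2 * (L / 2 * ‖v‖ ^ 2))
        (inner ℝ (gradient f z) v + t * (L * ‖v‖ ^ 2)) t := by
    refine ((((hasDerivAt_id t).mul_const _).const_add (f z)).add
      ((hasDerivAt_pow 2 t).mul_const _)).congr_deriv ?_
    push_cast
    ring
  have hslope (t : ℝ) (ht : 0 ≤ t) : inner ℝ (gradient f (z + t • v)) v ≤
      inner ℝ (gradient f z) v + t * (L * ‖v‖ ^ 2) := by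
    have hlip : ‖gradient f (z + t • v) - gradient f z‖ ≤ L * (t * ‖v‖) := by
      simpa [norm_smul, abs_of_nonneg ht] using hf.norm_gradient_sub_le (z + t • v) z
    have hcs := real_inner_le_norm (gradient f (z + t • v) - gradient f z) v
    rw [inner_sub_left] at hcs
    nlinarith [mul_le_mul_of_nonneg_right hlip (norm_nonneg v)]
  have := image_le_of_deriv_right_le_deriv_boundary (a := 0) (b := 1)
    (fun t _ ↦ (hline t).continuousAt.continuousWithinAt)
    (fun t _ ↦ (hline t).hasDerivWithinAt) (by simp)
    (fun t _ ↦ (hparabola t).continuousAt.continuousWithinAt)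
    (fun t _ ↦ (hparabola t).hasDerivWithinAt) (fun t ht ↦ hslope t ht.1)
    (Set.right_mem_Icc.2 zero_le_one)
  simpa using this

lemma sub_le_of_forall_le (hf : IsLSmooth L f) {a : E} (ha : ∀ y, f a ≤ f y) (y z : E) :
    f z - f y ≤ L / 2 * ‖z - a‖ ^ 2 := by
  have hgrowth := hf.apply_add_le a (z - a)
  rw [gradient_eq_zero_of_forall_le ha, inner_zero_left, add_sub_cancel] at hgrowth
  linarith [ha y]

-- Polarization: `‖∇f‖² = 2⟪∇f, v⟫ - ‖v‖² + ‖v - ∇f‖²`, with the inner product bounded by descent.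
lemma sq_norm_gradient_le (hf : IsLSmooth L f) {α : ℝ} (hα : 0 < α) (z v : E) :
    ‖gradient f z‖ ^ 2 ≤
      2 / α * (f z - f (z - α • v)) - (1 - L * α) * ‖v‖ ^ 2 + ‖v - gradient f z‖ ^ 2 := by
  have hdescent : f (z - α • v) ≤
      f z - α * inner ℝ (gradient f z) v + L / 2 * (α * ‖v‖) ^ 2 := by
    simpa [← sub_eq_add_neg, inner_smul_right, norm_smul, abs_of_pos hα] using
      hf.apply_add_le z (-(α • v))
  have hinner : 2 * inner ℝ (gradient f z) v ≤
      2 / α * (f z - f (z - α • v)) + L * α * ‖v‖ ^ 2 := by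
    have hscaled := mul_le_mul_of_nonneg_left hdescent (by positivity : 0 ≤ 2 / α)
    have hexpand : 2 / α * (f z - α * inner ℝ (gradient f z) v + L / 2 * (α * ‖v‖) ^ 2) =
        2 / α * f z - 2 * inner ℝ (gradient f z) v + L * α * ‖v‖ ^ 2 := by
      field_simp
    linarith
  rw [norm_sub_sq_real, real_inner_comm]
  linarith

end IsLSmooth

end Smooth

section DelayedDescent

open Finset

lemma sum_sum_Ico_window_le {a : ℕ → ℝ} (ha : ∀ j, 0 ≤ a j) (m n : ℕ) :
    ∑ k ∈ Ico m n, ∑ j ∈ Ico (k + 1 - m) k, a j ≤ m * ∑ j ∈ range n, a j := by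
  have hcard (j : ℕ) : #{k ∈ Ico m n | k + 1 - m ≤ j ∧ j < k} ≤ m := by
    have hsub : {k ∈ Ico m n | k + 1 - m ≤ j ∧ j < k} ⊆ Ico j (j + m) := by
      intro k
      simp only [mem_Ico, mem_filter]
      lia
    simpa using card_le_card hsub
  calc ∑ k ∈ Ico m n, ∑ j ∈ Ico (k + 1 - m) k, a j
      = ∑ j ∈ range n, ∑ k ∈ Ico m n with k + 1 - m ≤ j ∧ j < k, a j := by
        refine sum_comm' fun k j ↦ ?_
        simp only [mem_Ico, mem_filter, mem_range]
        lia
    _ ≤ ∑ j ∈ range n, m * a j := by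
        refine sum_le_sum fun j _ ↦ ?_
        rw [sum_const, nsmul_eq_mul]
        exact mul_le_mul_of_nonneg_right (Nat.cast_le.2 (hcard j)) (ha j)
    _ = m * ∑ j ∈ range n, a j := (mul_sum ..).symm

section Steps

variable {E : Type*} [SeminormedAddCommGroup E] [NormedSpace ℝ E] {α : ℝ} {x g : ℕ → E}

lemma norm_sub_le_mul_sum_norm_steps (hα : 0 ≤ α) {m n : ℕ} (hmn : m ≤ n)
    (hx : ∀ k ∈ Ico m n, x (k + 1) = x k - α • g k) :
    ‖x m - x n‖ ≤ α * ∑ k ∈ Ico m n, ‖g k‖ := by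
  rw [← dist_eq_norm, mul_sum]
  refine dist_le_Ico_sum_of_dist_le hmn fun {k} hmk hkn ↦ ?_
  rw [hx k (mem_Ico.2 ⟨hmk, hkn⟩), dist_eq_norm, sub_sub_cancel, norm_smul, Real.norm_of_nonneg hα]

lemma norm_le_of_norm_steps_le (hα : 0 ≤ α) {n : ℕ} {r C : ℝ} (hC : 0 ≤ C)
    (hn : n * (α * C) ≤ r) (hx0 : x 0 = 0) (hx : ∀ k < n, x (k + 1) = x k - α • g k)
    (hg : ∀ k < n, (∀ t ≤ k, ‖x t‖ ≤ r) → ‖g k‖ ≤ C) {k : ℕ} (hk : k ≤ n) :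
    ‖x k‖ ≤ r := by
  induction k using Nat.strong_induction_on with
  | _ k ih =>
    have hsteps : ∀ j ∈ range k, ‖g j‖ ≤ C := fun j hj ↦ by
      have hjk := mem_range.1 hj
      exact hg j (by lia) fun t ht ↦ ih t (by lia) (by lia)
    have hpath : ‖x k‖ ≤ α * ∑ j ∈ range k, ‖g j‖ := by
      simpa [hx0] using norm_sub_le_mul_sum_norm_steps hα k.zero_le
        fun j hj ↦ hx j ((mem_Ico.1 hj).2.trans_le hk)
    have hlength : α * ∑ j ∈ range k, ‖g j‖ ≤ k * (α * C) := by
      have := mul_le_mul_of_nonneg_left (sum_le_card_nsmul _ _ _ hsteps) hα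
      rwa [card_range, nsmul_eq_mul, mul_left_comm] at this
    exact (hpath.trans hlength).trans (le_trans (by gcongr) hn)

end Steps

variable {E : Type*} [NormedAddCommGroup E] [InnerProductSpace ℝ E] [CompleteSpace E]

theorem IsLSmooth.sum_sq_norm_gradient_le {L α : ℝ} {f : E → ℝ} (hf : IsLSmooth L f) (hα : 0 < α)
    {τ K : ℕ} (hτK : τ ≤ K) (hstep : L * α + (L * α * τ) ^ 2 ≤ 1) {x g : ℕ → E}
    (hx : ∀ k ∈ Ico τ K, x (k + 1) = x k - α • g k)
    (herr : ∀ k ∈ Ico τ K,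
      ‖g k - gradient f (x k)‖ ≤ L * (α * ∑ j ∈ Ico (k + 1 - τ) k, ‖g j‖)) :
    ∑ k ∈ Ico τ K, ‖gradient f (x k)‖ ^ 2 ≤
      2 / α * (f (x τ) - f (x K)) + (L * α * τ) ^ 2 * ∑ k ∈ range τ, ‖g k‖ ^ 2 := by
  have hsq_err : ∀ k ∈ Ico τ K, ‖g k - gradient f (x k)‖ ^ 2 ≤
      (L * α) ^ 2 * τ * ∑ j ∈ Ico (k + 1 - τ) k, ‖g j‖ ^ 2 := fun k hk ↦ by
    have hcard : (#(Ico (k + 1 - τ) k) : ℝ) ≤ τ := by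
      rw [Nat.card_Ico]
      exact_mod_cast (by lia : k - (k + 1 - τ) ≤ τ)
    calc ‖g k - gradient f (x k)‖ ^ 2
        ≤ (L * (α * ∑ j ∈ Ico (k + 1 - τ) k, ‖g j‖)) ^ 2 := by gcongr; exact herr k hk
      _ = (L * α) ^ 2 * (∑ j ∈ Ico (k + 1 - τ) k, ‖g j‖) ^ 2 := by ring
      _ ≤ (L * α) ^ 2 * (τ * ∑ j ∈ Ico (k + 1 - τ) k, ‖g j‖ ^ 2) := by
          gcongr
          exact sq_sum_le_card_mul_sum_sq.trans (by gcongr)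
      _ = _ := by ring
  have htotal_err : (L * α) ^ 2 * τ * ∑ k ∈ Ico τ K, ∑ j ∈ Ico (k + 1 - τ) k, ‖g j‖ ^ 2 ≤
      (L * α * τ) ^ 2 * ∑ k ∈ range K, ‖g k‖ ^ 2 := by
    calc _ ≤ (L * α) ^ 2 * τ * (τ * ∑ k ∈ range K, ‖g k‖ ^ 2) := by
          gcongr
          exact sum_sum_Ico_window_le (fun j ↦ sq_nonneg ‖g j‖) τ K
      _ = _ := by ring
  have hdescent : ∑ k ∈ Ico τ K, ‖gradient f (x k)‖ ^ 2 ≤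
      ∑ k ∈ Ico τ K, (2 / α * -(f (x (k + 1)) - f (x k)) - (1 - L * α) * ‖g k‖ ^ 2
        + (L * α) ^ 2 * τ * ∑ j ∈ Ico (k + 1 - τ) k, ‖g j‖ ^ 2) := by
    refine sum_le_sum fun k hk ↦ (hf.sq_norm_gradient_le hα (x k) (g k)).trans ?_
    rw [← hx k hk, neg_sub]
    gcongr
    exact hsq_err k hk
  rw [sum_add_distrib, sum_sub_distrib, ← mul_sum, ← mul_sum, ← mul_sum, sum_neg_distrib,
    sum_Ico_sub (fun k ↦ f (x k)) hτK] at hdescent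
  rw [← sum_range_add_sum_Ico _ hτK] at htotal_err
  have hlate : 0 ≤ ∑ k ∈ Ico τ K, ‖g k‖ ^ 2 := by positivity
  linarith [mul_le_mul_of_nonneg_right hstep hlate]

end DelayedDescent

section Sampling

open Finset

/-- Every index occurs in every window of `τ` consecutive entries of the sample sequence `ω`: the
good event for SAG, on which no stored gradient is more than `τ` iterations old. Windows start at
`s` and must fit into the `K` available entries. -/
def HitsEveryWindow {ι : Type*} {K : ℕ} (τ : ℕ) (ω : Fin K → ι) : Prop :=
  ∀ s, s + τ ≤ K → ∀ i, ∃ j : Fin K, (j : ℕ) ∈ Ico s (s + τ) ∧ ω j = i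

variable {ι : Type*} [Fintype ι] [Nonempty ι]

lemma card_filter_forall_mem_ne [DecidableEq ι] {κ : Type*} [Fintype κ] [DecidableEq κ]
    (s : Finset κ) (i : ι) :
    (#{ω : κ → ι | ∀ j ∈ s, ω j ≠ i} : ℝ) =
      (1 - (Fintype.card ι : ℝ)⁻¹) ^ #s * (Fintype.card ι : ℝ) ^ Fintype.card κ := by
  have hbox : ({ω : κ → ι | ∀ j ∈ s, ω j ≠ i} : Finset (κ → ι)) =
      Fintype.piFinset fun j ↦ if j ∈ s then univ.erase i else univ := by
    ext ω
    simp only [mem_filter, mem_univ, true_and, Fintype.mem_piFinset]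
    refine forall_congr' fun j ↦ ?_
    split_ifs with hj <;> simp [hj]
  have hfactor (j : κ) : (#(if j ∈ s then univ.erase i else univ) : ℝ) =
      (if j ∈ s then 1 - (Fintype.card ι : ℝ)⁻¹ else 1) * Fintype.card ι := by
    split_ifs
    · rw [cast_card_erase_of_mem (mem_univ i), card_univ, sub_mul, one_mul,
        inv_mul_cancel₀ (Nat.cast_ne_zero.2 Fintype.card_ne_zero)]
    · rw [card_univ, one_mul]
  rw [hbox, Fintype.card_piFinset, Nat.cast_prod, prod_congr rfl fun j _ ↦ hfactor j,
    prod_mul_distrib, prod_ite_mem, univ_inter, prod_const, prod_const, card_univ]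

lemma card_filter_forall_window_ne [DecidableEq ι] {K s τ : ℕ} (hs : s + τ ≤ K) (i : ι) :
    (#{ω : Fin K → ι | ∀ j : Fin K, (j : ℕ) ∈ Ico s (s + τ) → ω j ≠ i} : ℝ) =
      (1 - (Fintype.card ι : ℝ)⁻¹) ^ τ * (Fintype.card ι : ℝ) ^ K := by
  have hlt : ∀ j ∈ Ico s (s + τ), j < K := fun j hj ↦ (mem_Ico.1 hj).2.trans_le hs
  have hcard := card_filter_forall_mem_ne ((Ico s (s + τ)).attachFin hlt) i
  rw [card_attachFin, Nat.card_Ico, Nat.add_sub_cancel_left, Fintype.card_fin] at hcard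
  simpa only [mem_attachFin] using hcard

lemma one_sub_inv_pow_le_inv {n y : ℝ} (hn : 1 ≤ n) (hy : 0 < y) {m : ℕ}
    (hm : n * Real.log y ≤ m) : (1 - n⁻¹) ^ m ≤ y⁻¹ := by
  have hnonneg : 0 ≤ 1 - n⁻¹ := sub_nonneg.2 (inv_le_one_of_one_le₀ hn)
  calc (1 - n⁻¹) ^ m ≤ Real.exp (-n⁻¹) ^ m := by gcongr; exact Real.one_sub_le_exp_neg _
    _ = Real.exp (-(m / n)) := by rw [← Real.exp_nat_mul]; ring_nf
    _ ≤ Real.exp (-Real.log y) := by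
        gcongr
        rwa [le_div_iff₀' (by positivity)]
    _ = y⁻¹ := by rw [Real.exp_neg, Real.exp_log hy]

lemma card_filter_not_hitsEveryWindow_le (K : ℕ) {τ : ℕ} (hτ : 0 < τ)
    [DecidablePred fun ω : Fin K → ι ↦ ¬ HitsEveryWindow τ ω] :
    (#{ω : Fin K → ι | ¬ HitsEveryWindow τ ω} : ℝ) ≤
      K * Fintype.card ι * ((1 - (Fintype.card ι : ℝ)⁻¹) ^ τ * (Fintype.card ι : ℝ) ^ K) := by
  classical
  let starts : Finset (ℕ × ι) := range (K + 1 - τ) ×ˢ univ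
  let missed (p : ℕ × ι) : Finset (Fin K → ι) :=
    {ω | ∀ j : Fin K, (j : ℕ) ∈ Ico p.1 (p.1 + τ) → ω j ≠ p.2}
  have hmem_starts (s : ℕ) (i : ι) : (s, i) ∈ starts ↔ s + τ ≤ K := by
    simp only [starts, mem_product, mem_range, mem_univ, and_true]
    lia
  have hmissed : ∀ p ∈ starts, (#(missed p) : ℝ) =
      (1 - (Fintype.card ι : ℝ)⁻¹) ^ τ * (Fintype.card ι : ℝ) ^ K := fun p hp ↦
    card_filter_forall_window_ne ((hmem_starts p.1 p.2).1 hp) p.2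
  have hcover : ({ω | ¬ HitsEveryWindow τ ω} : Finset (Fin K → ι)) ⊆ starts.biUnion missed := by
    intro ω hω
    simp only [HitsEveryWindow, mem_filter, mem_univ, true_and, not_forall, not_exists,
      not_and] at hω
    obtain ⟨s, hs, i, hi⟩ := hω
    exact mem_biUnion.2 ⟨(s, i), (hmem_starts s i).2 hs, mem_filter.2 ⟨mem_univ ω, hi⟩⟩
  have hstarts : (#starts : ℝ) ≤ K * Fintype.card ι := by
    rw [card_product, card_range, card_univ]
    exact_mod_cast Nat.mul_le_mul_right _ (by lia : K + 1 - τ ≤ K)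
  have hnonneg : 0 ≤ 1 - (Fintype.card ι : ℝ)⁻¹ :=
    sub_nonneg.2 (inv_le_one_of_one_le₀ (Nat.one_le_cast.2 Fintype.card_pos))
  calc (#{ω : Fin K → ι | ¬ HitsEveryWindow τ ω} : ℝ)
      ≤ ∑ p ∈ starts, (#(missed p) : ℝ) := by
        exact_mod_cast (card_le_card hcover).trans card_biUnion_le
    _ = #starts * ((1 - (Fintype.card ι : ℝ)⁻¹) ^ τ * (Fintype.card ι : ℝ) ^ K) := by
        rw [sum_congr rfl hmissed, sum_const, nsmul_eq_mul]
    _ ≤ _ := by gcongr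

lemma one_sub_le_card_filter_hitsEveryWindow_div {K τ : ℕ} (hK : 0 < K) (hτ : 0 < τ)
    {δ : ℝ} (hδ : 0 < δ)
    (hlog : Fintype.card ι * Real.log (Fintype.card ι * K / δ) ≤ τ)
    [DecidablePred fun ω : Fin K → ι ↦ HitsEveryWindow τ ω] :
    1 - δ ≤ #{ω : Fin K → ι | HitsEveryWindow τ ω} / (Fintype.card ι : ℝ) ^ K := by
  have hι : (1 : ℝ) ≤ Fintype.card ι := Nat.one_le_cast.2 Fintype.card_pos
  have hmiss : (1 - (Fintype.card ι : ℝ)⁻¹) ^ τ ≤ (Fintype.card ι * K / δ)⁻¹ :=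
    one_sub_inv_pow_le_inv hι (by positivity) hlog
  have hbad : (#{ω : Fin K → ι | ¬ HitsEveryWindow τ ω} : ℝ) ≤ δ * (Fintype.card ι : ℝ) ^ K :=
    calc _ ≤ _ := card_filter_not_hitsEveryWindow_le K hτ
      _ ≤ K * Fintype.card ι * ((Fintype.card ι * K / δ)⁻¹ * (Fintype.card ι : ℝ) ^ K) := by gcongr
      _ = δ * (Fintype.card ι : ℝ) ^ K := by field_simp
  have hsplit : (#{ω : Fin K → ι | HitsEveryWindow τ ω} : ℝ) +
      #{ω : Fin K → ι | ¬ HitsEveryWindow τ ω} = (Fintype.card ι : ℝ) ^ K := by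
    have := card_filter_add_card_filter_not (s := univ) fun ω : Fin K → ι ↦ HitsEveryWindow τ ω
    rw [card_univ, Fintype.card_fun, Fintype.card_fin] at this
    exact_mod_cast this
  rw [le_div_iff₀ (by positivity)]
  linarith

end Sampling

section SAG

open Finset

variable {ι E : Type*} [Fintype ι] [DecidableEq ι] {K : ℕ}

/-- The first `K` iterations of the stochastic average gradient method with gradient oracles `G i`,
step size `α` and sample sequence `ω`, started at the origin: iterates `x`, directions `g` and
memory `h`. The value `h i k` is the content of slot `i` before iteration `k`; nothing is required
of the sequences beyond iteration `K`. -/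
structure IsSAGRun [AddCommGroup E] [Module ℝ E] (G : ι → E → E) (α : ℝ) (ω : Fin K → ι)
    (x g : ℕ → E) (h : ι → ℕ → E) : Prop where
  iterate_zero : x 0 = 0
  memory_zero : ∀ i, h i 0 = 0
  memory_succ : ∀ i k (hk : k < K),
    h i (k + 1) = if ω ⟨k, hk⟩ = i then G i (x k) else h i k
  direction : ∀ k (hk : k < K),
    g k = (Fintype.card ι : ℝ)⁻¹ • (∑ i, h i k)
      + (Fintype.card ι : ℝ)⁻¹ • (G (ω ⟨k, hk⟩) (x k) - h (ω ⟨k, hk⟩) k)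
  iterate_succ : ∀ k, k < K → x (k + 1) = x k - α • g k

namespace IsSAGRun

section Memory

variable [AddCommGroup E] [Module ℝ E] {G : ι → E → E} {α : ℝ} {ω : Fin K → ι}
  {x g : ℕ → E} {h : ι → ℕ → E}

lemma direction_eq_average_memory (hrun : IsSAGRun G α ω x g h) {k : ℕ} (hk : k < K) :
    g k = (Fintype.card ι : ℝ)⁻¹ • ∑ i, h i (k + 1) := by
  have hupdate (i : ι) :
      h i (k + 1) = h i k + if ω ⟨k, hk⟩ = i then G i (x k) - h i k else 0 := by
    rw [hrun.memory_succ i k hk]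
    split_ifs <;> simp
  rw [hrun.direction k hk, ← smul_add, sum_congr rfl fun i _ ↦ hupdate i, sum_add_distrib,
    sum_ite_eq univ, if_pos (mem_univ _)]

lemma memory_eq_oracle_or_unchanged (hrun : IsSAGRun G α ω x g h) (i : ι) {s k : ℕ} (hsk : s ≤ k)
    (hk : k ≤ K) :
    (∃ t ∈ Ico s k, h i k = G i (x t)) ∨
      (∀ j : Fin K, (j : ℕ) ∈ Ico s k → ω j ≠ i) ∧ h i k = h i s := by
  induction k, hsk using Nat.le_induction with
  | base => exact Or.inr ⟨by simp, rfl⟩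
  | succ k hsk ih =>
    rw [hrun.memory_succ i k hk]
    split_ifs with hsampled
    · exact Or.inl ⟨k, mem_Ico.2 ⟨hsk, k.lt_succ_self⟩, rfl⟩
    · rcases ih (by lia) with ⟨t, ht, hmem⟩ | ⟨hmissed, hmem⟩
      · exact Or.inl ⟨t, Ico_subset_Ico_right k.le_succ ht, hmem⟩
      · refine Or.inr ⟨fun j hj hji ↦ ?_, hmem⟩
        have hjk : (j : ℕ) ≠ k := fun hjk ↦ hsampled (by simpa [← hjk] using hji)
        refine hmissed j ?_ hji
        simp only [mem_Ico] at hj ⊢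
        lia

end Memory

variable [Nonempty ι]

section Oracle

variable [NormedAddCommGroup E] [NormedSpace ℝ E] {G : ι → E → E} {α : ℝ} {ω : Fin K → ι}
  {x g : ℕ → E} {h : ι → ℕ → E}

lemma norm_direction_le (hrun : IsSAGRun G α ω x g h) {k : ℕ} (hk : k < K) {C : ℝ} (hC : 0 ≤ C)
    (hG : ∀ i, ∀ t ≤ k, ‖G i (x t)‖ ≤ C) : ‖g k‖ ≤ C := by
  rw [hrun.direction_eq_average_memory hk]
  refine norm_inv_card_smul_sum_le fun i ↦ ?_
  rcases hrun.memory_eq_oracle_or_unchanged i (k + 1).zero_le hk with ⟨t, ht, hmem⟩ | ⟨-, hmem⟩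
  · rw [hmem]
    exact hG i t (Nat.lt_succ_iff.1 (mem_Ico.1 ht).2)
  · simpa [hmem, hrun.memory_zero] using hC

lemma norm_direction_sub_le (hrun : IsSAGRun G α ω x g h) (hα : 0 ≤ α) {L : ℝ} (hL : 0 ≤ L)
    (hG : ∀ i y z, ‖G i y - G i z‖ ≤ L * ‖y - z‖) {τ : ℕ} (hω : HitsEveryWindow τ ω) {k : ℕ}
    (hk : k ∈ Ico τ K) :
    ‖g k - (Fintype.card ι : ℝ)⁻¹ • ∑ i, G i (x k)‖ ≤
      L * (α * ∑ j ∈ Ico (k + 1 - τ) k, ‖g j‖) := by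
  obtain ⟨hτk, hkK⟩ := mem_Ico.1 hk
  rw [hrun.direction_eq_average_memory hkK, ← smul_sub, ← sum_sub_distrib]
  refine norm_inv_card_smul_sum_le fun i ↦ ?_
  have hend : k + 1 - τ + τ = k + 1 := by lia
  obtain ⟨j, hj, hji⟩ := hω (k + 1 - τ) (hend.trans_le hkK) i
  rw [hend] at hj
  obtain ⟨t, ht, hmem⟩ | ⟨hmissed, -⟩ :=
    hrun.memory_eq_oracle_or_unchanged i (Nat.sub_le (k + 1) τ) hkK
  swap
  · exact absurd hji (hmissed j hj)
  obtain ⟨hst, htk⟩ := mem_Ico.1 ht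
  have hpath : ‖x t - x k‖ ≤ α * ∑ j ∈ Ico t k, ‖g j‖ :=
    norm_sub_le_mul_sum_norm_steps hα (Nat.lt_succ_iff.1 htk)
      fun j hj ↦ hrun.iterate_succ j ((mem_Ico.1 hj).2.trans hkK)
  rw [hmem]
  calc ‖G i (x t) - G i (x k)‖ ≤ L * ‖x t - x k‖ := hG i _ _
    _ ≤ L * (α * ∑ j ∈ Ico t k, ‖g j‖) := by gcongr
    _ ≤ L * (α * ∑ j ∈ Ico (k + 1 - τ) k, ‖g j‖) := by gcongr

end Oracle

section Smooth

variable [NormedAddCommGroup E] [InnerProductSpace ℝ E] [CompleteSpace E]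
  {F : ι → E → ℝ} {α L B : ℝ} {ω : Fin K → ι} {x g : ℕ → E} {h : ι → ℕ → E} {xistar : ι → E}

lemma norm_direction_le_of_norm_iterate_le (hrun : IsSAGRun (fun i ↦ gradient (F i)) α ω x g h)
    (hL : 0 ≤ L) (hF : ∀ i, IsLSmooth L (F i)) (hxi : ∀ i y, F i (xistar i) ≤ F i y)
    (hBi : ∀ i, ‖xistar i‖ ≤ B) {k : ℕ} (hk : k < K) {r : ℝ} (hxr : ∀ t ≤ k, ‖x t‖ ≤ r) :
    ‖g k‖ ≤ L * (r + B) := by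
  have hgrad (i : ι) (t : ℕ) (ht : t ≤ k) : ‖gradient (F i) (x t)‖ ≤ L * (r + B) :=
    calc ‖gradient (F i) (x t)‖ ≤ L * ‖x t - xistar i‖ := (hF i).norm_gradient_le (hxi i) _
      _ ≤ L * (r + B) := by
          gcongr
          exact (norm_sub_le _ _).trans (add_le_add (hxr t ht) (hBi i))
  have hnonneg : 0 ≤ L * (r + B) :=
    (norm_nonneg _).trans (hgrad (Classical.arbitrary ι) k le_rfl)
  exact hrun.norm_direction_le hk hnonneg hgrad

lemma norm_iterate_le (hrun : IsSAGRun (fun i ↦ gradient (F i)) α ω x g h)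
    (hL : 0 ≤ L) (hF : ∀ i, IsLSmooth L (F i)) (hxi : ∀ i y, F i (xistar i) ≤ F i y)
    (hBi : ∀ i, ‖xistar i‖ ≤ B) (hα : 0 ≤ α) {n : ℕ} (hn : n ≤ K) {r : ℝ} (hr : 0 ≤ r)
    (hαr : L * α * n * (r + B) ≤ r) {k : ℕ} (hk : k ≤ n) : ‖x k‖ ≤ r := by
  have hB : 0 ≤ B := (norm_nonneg _).trans (hBi (Classical.arbitrary ι))
  refine norm_le_of_norm_steps_le hα (C := L * (r + B)) (by positivity)
    (le_of_eq_of_le (by ring) hαr) hrun.iterate_zero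
    (fun k hk ↦ hrun.iterate_succ k (hk.trans_le hn)) (fun k hk hxr ↦ ?_) hk
  exact hrun.norm_direction_le_of_norm_iterate_le hL hF hxi hBi (hk.trans_le hn) hxr

lemma sum_sq_norm_direction_le (hrun : IsSAGRun (fun i ↦ gradient (F i)) α ω x g h)
    (hL : 0 ≤ L) (hF : ∀ i, IsLSmooth L (F i)) (hxi : ∀ i y, F i (xistar i) ≤ F i y)
    (hBi : ∀ i, ‖xistar i‖ ≤ B) {n : ℕ} (hn : n ≤ K) {r : ℝ} (hxr : ∀ k < n, ‖x k‖ ≤ r) :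
    ∑ k ∈ range n, ‖g k‖ ^ 2 ≤ n * (L * (r + B)) ^ 2 := by
  refine (sum_le_card_nsmul _ _ ((L * (r + B)) ^ 2) fun k hk ↦ ?_).trans_eq (by simp)
  have hkn := mem_range.1 hk
  gcongr
  exact hrun.norm_direction_le_of_norm_iterate_le hL hF hxi hBi (hkn.trans_le hn)
    fun t ht ↦ hxr t (ht.trans_lt hkn)

theorem sum_sq_norm_gradient_le {τ : ℕ}
    (hrun : IsSAGRun (fun i ↦ gradient (F i)) (1 / (16 * L * τ)) ω x g h)
    (hω : HitsEveryWindow τ ω) (hL : 0 < L) (hτ : 0 < τ) (hτK : τ ≤ K)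
    (hF : ∀ i, IsLSmooth L (F i)) (hxi : ∀ i y, F i (xistar i) ≤ F i y)
    (hBi : ∀ i, ‖xistar i‖ ≤ B) {f : E → ℝ} (hf : ∀ z, f z = (∑ i, F i z) / Fintype.card ι)
    {xstar : E} (hmin : ∀ y, f xstar ≤ f y) (hB : ‖xstar‖ ≤ B) :
    ∑ k ∈ Ico τ K, ‖gradient f (x k)‖ ^ 2 ≤ 37 / 2 * L ^ 2 * B ^ 2 * τ := by
  obtain rfl : f = fun z ↦ (∑ i, F i z) / (Fintype.card ι : ℝ) := funext hf
  set f : E → ℝ := fun z ↦ (∑ i, F i z) / (Fintype.card ι : ℝ)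
  set α := 1 / (16 * L * τ) with hα_def
  have hfL : IsLSmooth L f := IsLSmooth.sum_div_card hF
  have hτ1 : (1 : ℝ) ≤ τ := Nat.one_le_cast.2 hτ
  have hα : 0 < α := by positivity
  have hB0 : 0 ≤ B := (norm_nonneg _).trans hB
  have hLατ : L * α * τ = 1 / 16 := by rw [hα_def]; field_simp
  have hLα : L * α ≤ 1 / 16 := hLατ ▸ le_mul_of_one_le_right (by positivity) hτ1
  -- `B / 15` is the fixed point of `r ↦ L * α * τ * (r + B)`.
  have hx : ∀ k ≤ τ, ‖x k‖ ≤ B / 15 := fun k hk ↦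
    hrun.norm_iterate_le hL.le hF hxi hBi hα.le hτK (by positivity)
      (by rw [hLατ]; linarith) hk
  have hg : ∑ k ∈ range τ, ‖g k‖ ^ 2 ≤ τ * (L * (B / 15 + B)) ^ 2 :=
    hrun.sum_sq_norm_direction_le hL.le hF hxi hBi hτK fun k hk ↦ hx k hk.le
  have hgap : f (x τ) - f (x K) ≤ L / 2 * (B / 15 + B) ^ 2 := by
    refine (hfL.sub_le_of_forall_le hmin (x K) (x τ)).trans ?_
    gcongr
    exact (norm_sub_le _ _).trans (add_le_add (hx τ le_rfl) hB)
  have herr : ∀ k ∈ Ico τ K, ‖g k - gradient f (x k)‖ ≤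
      L * (α * ∑ j ∈ Ico (k + 1 - τ) k, ‖g j‖) := fun k hk ↦ by
    rw [gradient_sum_div fun i ↦ (hF i).differentiable (x k)]
    exact hrun.norm_direction_sub_le hα.le hL.le (fun i ↦ (hF i).norm_gradient_sub_le) hω hk
  calc ∑ k ∈ Ico τ K, ‖gradient f (x k)‖ ^ 2
      ≤ 2 / α * (f (x τ) - f (x K)) + (L * α * τ) ^ 2 * ∑ k ∈ range τ, ‖g k‖ ^ 2 :=
        hfL.sum_sq_norm_gradient_le hα hτK (by rw [hLατ]; linarith)
          (fun k hk ↦ hrun.iterate_succ k (mem_Ico.1 hk).2) herr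
    _ ≤ 32 * L * τ * (L / 2 * (B / 15 + B) ^ 2) + (1 / 16) ^ 2 * (τ * (L * (B / 15 + B)) ^ 2) := by
        have hα_inv : 2 / α = 32 * L * τ := by rw [hα_def]; field_simp; norm_num
        rw [hα_inv, hLατ]
        gcongr
    _ ≤ 37 / 2 * L ^ 2 * B ^ 2 * τ := by
        have : 0 ≤ L ^ 2 * B ^ 2 * τ := by positivity
        linarith

end Smooth

end IsSAGRun

end SAG

open Classical in
theorem sag_nonconvex_high_prob_general {ι E : Type*} [Fintype ι] [Nonempty ι] [DecidableEq ι]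
    [NormedAddCommGroup E] [InnerProductSpace ℝ E] [CompleteSpace E]
    {L : ℝ} (hL : 0 < L) {F : ι → E → ℝ} (hF : ∀ i, IsLSmooth L (F i))
    {f : E → ℝ} (hf : ∀ z, f z = (∑ i, F i z) / Fintype.card ι)
    {xstar : E} (hmin : ∀ y, f xstar ≤ f y)
    {xistar : ι → E} (hxi : ∀ i y, F i (xistar i) ≤ F i y)
    {B : ℝ} (hB : ‖xstar‖ ≤ B) (hBi : ∀ i, ‖xistar i‖ ≤ B)
    {K τ : ℕ} {δ : ℝ} (hδ : 0 < δ) (hτ : 0 < τ)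
    (hlog : Fintype.card ι * Real.log (Fintype.card ι * K / δ) ≤ τ) (hτK : 2 * τ ≤ K)
    {x g : (Fin K → ι) → ℕ → E} {h : (Fin K → ι) → ι → ℕ → E}
    (hrun : ∀ ω,
      IsSAGRun (fun i ↦ gradient (F i)) (1 / (16 * L * τ)) ω (x ω) (g ω) (h ω)) :
    1 - δ ≤
      (Finset.univ.filter (fun ω : Fin K → ι ↦
          ((K : ℝ) - τ)⁻¹ * ∑ k ∈ Finset.Ico τ K, ‖gradient f (x ω k)‖ ^ 2 ≤
            37 * L ^ 2 * B ^ 2 * τ / K)).card / (Fintype.card ι : ℝ) ^ K := by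
  refine (one_sub_le_card_filter_hitsEveryWindow_div (by lia) hτ hδ hlog).trans ?_
  gcongr with ω
  intro hω
  have hsum := (hrun ω).sum_sq_norm_gradient_le hω hL hτ (by lia) hF hxi hBi hf hmin hB
  have hτ0 : (0 : ℝ) < τ := Nat.cast_pos.2 hτ
  have hhalf : (K : ℝ) / 2 ≤ K - τ := by
    have : (2 : ℝ) * τ ≤ K := mod_cast hτK
    linarith
  have hK0 : (0 : ℝ) < K := by linarith
  calc ((K : ℝ) - τ)⁻¹ * ∑ k ∈ Finset.Ico τ K, ‖gradient f (x ω k)‖ ^ 2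
      ≤ ((K : ℝ) / 2)⁻¹ * (37 / 2 * L ^ 2 * B ^ 2 * τ) := by gcongr
    _ = 37 * L ^ 2 * B ^ 2 * τ / K := by field_simp

/- STATEMENT 17 (SAG, non-convex case, high probability).
The i.i.d. uniform sampling sequence is modeled as `ω : Fin K → Fin N`, uniformly
distributed, so the probability of an event is its cardinality divided by `N ^ K`.
The trajectory `x ω`, direction `g ω`, and memory `h ω` are driven by the sample `ω`. -/
open Classical in
theorem sag_nonconvex_high_prob (d N : ℕ) (hd : 1 ≤ d) (hN : 1 ≤ N)
    (L : ℝ) (hL : 0 < L)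
    (fi : Fin N → EuclideanSpace ℝ (Fin d) → ℝ)
    (hdiff : ∀ i, Differentiable ℝ (fi i))
    (hsmooth : ∀ i x y, ‖gradient (fi i) x - gradient (fi i) y‖ ≤ L * ‖x - y‖)
    (f : EuclideanSpace ℝ (Fin d) → ℝ)
    (hf : ∀ z, f z = (∑ i, fi i z) / N)
    (xstar : EuclideanSpace ℝ (Fin d)) (hmin : ∀ y, f xstar ≤ f y)
    (xistar : Fin N → EuclideanSpace ℝ (Fin d))
    (hxi : ∀ i y, fi i (xistar i) ≤ fi i y)
    (B : ℝ) (hB : B = max ‖xstar‖ (⨆ i, ‖xistar i‖))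
    (K : ℕ) (hK1 : 1 ≤ K) (δ : ℝ) (hδ0 : 0 < δ) (hδ1 : δ < 1)
    (τ : ℕ) (hτ : τ = ⌈(8 * (N : ℝ) / 3) * Real.log ((N : ℝ) * K / δ)⌉₊)
    (α : ℝ) (hα : α = 1 / (16 * L * τ))
    (hKτ : 2 * τ ≤ K)
    (x g : (Fin K → Fin N) → ℕ → EuclideanSpace ℝ (Fin d))
    (h : (Fin K → Fin N) → Fin N → ℕ → EuclideanSpace ℝ (Fin d))
    (hx0 : ∀ ω, x ω 0 = 0)
    (hh0 : ∀ ω i, h ω i 0 = 0)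
    (hhrec : ∀ ω (i : Fin N) (k : ℕ) (hk : k < K),
      h ω i (k + 1) = if ω ⟨k, hk⟩ = i then gradient (fi i) (x ω k) else h ω i k)
    (hg : ∀ ω (k : ℕ) (hk : k < K),
      g ω k = (N : ℝ)⁻¹ • (∑ i, h ω i k)
        + (N : ℝ)⁻¹ • (gradient (fi (ω ⟨k, hk⟩)) (x ω k) - h ω (ω ⟨k, hk⟩) k))
    (hxrec : ∀ ω (k : ℕ), k < K → x ω (k + 1) = x ω k - α • g ω k) :
    1 - δ ≤
      (Finset.univ.filter (fun ω : Fin K → Fin N =>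
          ((K : ℝ) - τ)⁻¹ * ∑ k ∈ Finset.Ico τ K, ‖gradient f (x ω k)‖ ^ 2 ≤
            768 * L ^ 2 * B ^ 2 * τ / K)).card / (N : ℝ) ^ K := by
  have : Nonempty (Fin N) := ⟨⟨0, hN⟩⟩
  have hNK : (1 : ℝ) < N * K / δ :=
    (one_lt_div hδ0).2 (hδ1.trans_le (mod_cast Nat.mul_pos hN hK1))
  have hlog_pos : 0 < N * Real.log (N * K / δ) :=
    mul_pos (Nat.cast_pos.2 hN) (Real.log_pos hNK)
  have hlog : N * Real.log (N * K / δ) ≤ τ :=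
    hτ ▸ (by linarith : _ ≤ 8 * (N : ℝ) / 3 * Real.log (N * K / δ)).trans (Nat.le_ceil _)
  have hBi (i : Fin N) : ‖xistar i‖ ≤ B :=
    hB ▸ (le_ciSup (Set.finite_range fun i ↦ ‖xistar i‖).bddAbove i).trans (le_max_right _ _)
  have hbound := sag_nonconvex_high_prob_general hL (fun i ↦ ⟨hdiff i, hsmooth i⟩)
    (by simpa using hf) hmin hxi (hB ▸ le_max_left _ _) hBi hδ0
    (Nat.cast_pos.1 (hlog_pos.trans_le hlog)) (by simpa using hlog) hKτ
    (fun ω ↦ ⟨hx0 ω, hh0 ω, hhrec ω, by simpa using hg ω, hα ▸ hxrec ω⟩)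
  rw [Fintype.card_fin] at hbound
  refine hbound.trans ?_
  gcongr
  norm_num
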